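/- arXiv:2504.16265 — 9 statements merged into one kernel-verified Lean document; each statement's English description precedes it below -/
import Mathlib

section
/- Let L be a first-order language and let Γ be a finite set of pairs (s,t) of L-terms with variables indexed by Fin v. For each n ≥ 1 define S(n) to be the maximum, over all L-structures M with underlying set Fin n, of the cardinality of the solution set Sol(M) = { a : Fin v → M | for every pair (s,t) ∈ Γ, the realization of s at a equals the realization of t at a }. Then for all integers n₁, n₂ ≥ 1, the maximum solution count is supermultiplicative: S(n₁ · n₂) ≥ S(n₁) · S(n₂). -/
open FirstOrder

/-- The number of solutions of the system of term equations `Γ` (in variables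
indexed by `Fin v`) under a given `L`-structure on `Fin n`. -/
noncomputable def solCount (L : FirstOrder.Language) (v : ℕ)
    (Γ : Finset (L.Term (Fin v) × L.Term (Fin v))) (n : ℕ)
    (M : L.Structure (Fin n)) : ℕ :=
  letI := M
  Nat.card { a : Fin v → Fin n //
    ∀ p ∈ Γ, FirstOrder.Language.Term.realize a p.1 = FirstOrder.Language.Term.realize a p.2 }

/-- The maximum solution count over all `L`-structures on `Fin n`. -/
noncomputable def maxSol (L : FirstOrder.Language) (v : ℕ)
    (Γ : Finset (L.Term (Fin v) × L.Term (Fin v))) (n : ℕ) : ℕ :=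
  sSup { k : ℕ | ∃ M : L.Structure (Fin n), k = solCount L v Γ n M }

/-- The coordinatewise structure on `Fin (n₁ * n₂)`. -/
def prodStr {L : FirstOrder.Language} {n₁ n₂ : ℕ} (M₁ : L.Structure (Fin n₁))
    (M₂ : L.Structure (Fin n₂)) : L.Structure (Fin (n₁ * n₂)) where
  funMap := fun f x => finProdFinEquiv
    (M₁.funMap f (fun i => (finProdFinEquiv.symm (x i)).1),
     M₂.funMap f (fun i => (finProdFinEquiv.symm (x i)).2))
  RelMap := fun _ _ => False

theorem prodStr_realize {L : FirstOrder.Language} {n₁ n₂ v : ℕ} (M₁ : L.Structure (Fin n₁))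
    (M₂ : L.Structure (Fin n₂)) (a : Fin v → Fin n₁) (b : Fin v → Fin n₂)
    (t : L.Term (Fin v)) :
    @FirstOrder.Language.Term.realize L _ (prodStr M₁ M₂) _
      (fun i => finProdFinEquiv (a i, b i)) t =
    finProdFinEquiv (@FirstOrder.Language.Term.realize L _ M₁ _ a t,
      @FirstOrder.Language.Term.realize L _ M₂ _ b t) := by
  induction t with
  | var i => rfl
  | func f ts ih =>
    change finProdFinEquiv (M₁.funMap f (fun i => (finProdFinEquiv.symm
        (@FirstOrder.Language.Term.realize L _ (prodStr M₁ M₂) _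
          (fun i => finProdFinEquiv (a i, b i)) (ts i))).1),
      M₂.funMap f (fun i => (finProdFinEquiv.symm
        (@FirstOrder.Language.Term.realize L _ (prodStr M₁ M₂) _
          (fun i => finProdFinEquiv (a i, b i)) (ts i))).2)) = _
    simp only [ih, Equiv.symm_apply_apply]
    rfl

theorem solCount_mul_le {L : FirstOrder.Language} {v : ℕ}
    (Γ : Finset (L.Term (Fin v) × L.Term (Fin v))) {n₁ n₂ : ℕ} (M₁ : L.Structure (Fin n₁))
    (M₂ : L.Structure (Fin n₂)) :
    solCount L v Γ n₁ M₁ * solCount L v Γ n₂ M₂ ≤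
      solCount L v Γ (n₁ * n₂) (prodStr M₁ M₂) := by
  unfold solCount
  rw [← Nat.card_prod]
  refine Nat.card_le_card_of_injective
    (fun x => ⟨fun i => finProdFinEquiv (x.1.1 i, x.2.1 i), fun p hp => ?_⟩) ?_
  · rw [prodStr_realize, prodStr_realize, x.1.2 p hp, x.2.2 p hp]
  · rintro ⟨⟨a, ha⟩, ⟨b, hb⟩⟩ ⟨⟨c, hc⟩, ⟨d, hd⟩⟩ h
    have h' := fun i => finProdFinEquiv.injective (congrFun (congrArg Subtype.val h) i)
    have e1 : a = c := funext fun i => congrArg Prod.fst (h' i)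
    have e2 : b = d := funext fun i => congrArg Prod.snd (h' i)
    subst e1 e2
    rfl

theorem maxSol_bdd (L : FirstOrder.Language) (v : ℕ)
    (Γ : Finset (L.Term (Fin v) × L.Term (Fin v))) (n : ℕ) :
    BddAbove { k : ℕ | ∃ M : L.Structure (Fin n), k = solCount L v Γ n M } := by
  refine ⟨Nat.card (Fin v → Fin n), ?_⟩
  rintro k ⟨M, rfl⟩
  exact Nat.card_le_card_of_injective _ Subtype.val_injective

theorem maxSol_mem (L : FirstOrder.Language) (v : ℕ)
    (Γ : Finset (L.Term (Fin v) × L.Term (Fin v))) (n : ℕ) (h : 1 ≤ n) :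
    ∃ M : L.Structure (Fin n), maxSol L v Γ n = solCount L v Γ n M :=
  Nat.sSup_mem (s := { k : ℕ | ∃ M : L.Structure (Fin n), k = solCount L v Γ n M })
    ⟨_, ⟨fun _ _ => ⟨0, h⟩, fun _ _ => False⟩, rfl⟩ (maxSol_bdd L v Γ n)

/-- Supermultiplicativity of the maximum number of solutions of a system of
term equations: `S (n₁ * n₂) ≥ S n₁ * S n₂` for all `n₁, n₂ ≥ 1`. -/
theorem maxSol_supermultiplicative (L : FirstOrder.Language) (v : ℕ)
    (Γ : Finset (L.Term (Fin v) × L.Term (Fin v)))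
    (n₁ n₂ : ℕ) (h₁ : 1 ≤ n₁) (h₂ : 1 ≤ n₂) :
    maxSol L v Γ n₁ * maxSol L v Γ n₂ ≤ maxSol L v Γ (n₁ * n₂) := by
  obtain ⟨M₁, e₁⟩ := maxSol_mem L v Γ n₁ h₁
  obtain ⟨M₂, e₂⟩ := maxSol_mem L v Γ n₂ h₂
  rw [e₁, e₂]
  exact (solCount_mul_le Γ M₁ M₂).trans (le_csSup (maxSol_bdd L v Γ _) ⟨_, rfl⟩)
end

section
/- Let S : ℕ → ℕ be monotone nondecreasing with S(n) ≥ 1 for all n ≥ 1, supermultiplicative in the sense that S(n · m) ≥ S(n) · S(m) for all n, m ≥ 1, and polynomially bounded, i.e., there exists v ∈ ℕ with S(n) ≤ n^v for all n ≥ 1. Then the limit of log(S(n)) / log(n) as n → ∞ exists, is finite (at most v), and equals the supremum over n ≥ 2 of log(S(n)) / log(n). -/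
/-- Fekete-type convergence for the normalised exponent: if `S : ℕ → ℕ` is
monotone, positive on `n ≥ 1`, supermultiplicative, and bounded by `n ^ v`,
then `log (S n) / log n` converges as `n → ∞` to a finite limit `L ≤ v`, which
equals the supremum over `n ≥ 2` of `log (S n) / log n`. -/
theorem fekete_normalised_exponent (S : ℕ → ℕ) (v : ℕ)
    (hmono : Monotone S)
    (hpos : ∀ n, 1 ≤ n → 1 ≤ S n)
    (hsuper : ∀ n m, 1 ≤ n → 1 ≤ m → S n * S m ≤ S (n * m))
    (hpoly : ∀ n, 1 ≤ n → S n ≤ n ^ v) :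
    ∃ L : ℝ, L ≤ (v : ℝ) ∧
      L = sSup { x : ℝ | ∃ n : ℕ, 2 ≤ n ∧ x = Real.log (S n) / Real.log n } ∧
      Filter.Tendsto (fun n : ℕ => Real.log (S n) / Real.log n)
        Filter.atTop (nhds L) := by
  set A := { x : ℝ | ∃ n : ℕ, 2 ≤ n ∧ x = Real.log (S n) / Real.log n } with hA
  have hlog : ∀ n : ℕ, 2 ≤ n → 0 < Real.log n := fun n hn =>
    Real.log_pos (by exact_mod_cast hn)
  have hub : ∀ x ∈ A, x ≤ (v : ℝ) := by
    rintro x ⟨n, hn, rfl⟩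
    rw [div_le_iff₀ (hlog n hn), ← Real.log_pow]
    apply Real.log_le_log
    · exact_mod_cast hpos n (by omega)
    · exact_mod_cast hpoly n (by omega)
  have hne : A.Nonempty := ⟨_, 2, le_refl 2, rfl⟩
  have hbdd : BddAbove A := ⟨v, hub⟩
  have hpow : ∀ m, 1 ≤ m → ∀ k, S m ^ k ≤ S (m ^ k) := by
    intro m hm k
    induction k with
    | zero => simpa using hpos 1 le_rfl
    | succ k ih =>
      rw [pow_succ, pow_succ]
      exact (Nat.mul_le_mul_right _ ih).trans (hsuper _ _ (Nat.one_le_pow _ _ hm) hm)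
  have key : ∀ m n : ℕ, 2 ≤ m → 2 ≤ n →
      Real.log (S m) / Real.log m - Real.log (S m) / Real.log n
        ≤ Real.log (S n) / Real.log n := by
    intro m n hm hn
    have h1 : m ^ Nat.log m n ≤ n := Nat.pow_log_le_self m (by omega)
    have h2 : n < m ^ (Nat.log m n + 1) := Nat.lt_pow_succ_log_self (by omega) n
    generalize Nat.log m n = k at h1 h2
    have h3 : (k : ℝ) * Real.log (S m) ≤ Real.log (S n) := by
      rw [← Real.log_pow]
      apply Real.log_le_log
      · have := hpos m (by omega)
        positivity
      · exact_mod_cast (hpow m (by omega) k).trans (hmono h1)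
    have h4 : Real.log n ≤ ((k : ℝ) + 1) * Real.log m := by
      have : Real.log n ≤ Real.log ((m : ℝ) ^ (k + 1)) := by
        apply Real.log_le_log
        · positivity
        · exact_mod_cast h2.le
      rw [Real.log_pow] at this
      exact_mod_cast this
    have hm0 := hlog m hm
    have hn0 := hlog n hn
    have hs : 0 ≤ Real.log (S m) := Real.log_natCast_nonneg _
    have h5 : Real.log n / Real.log m ≤ (k : ℝ) + 1 := (div_le_iff₀ hm0).2 h4
    have h6 := mul_le_mul_of_nonneg_left h5 hs
    rw [le_div_iff₀ hn0, sub_mul, div_mul_cancel₀ _ hn0.ne', div_mul_eq_mul_div, mul_div_assoc]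
    linarith
  refine ⟨sSup A, csSup_le hne hub, rfl, ?_⟩
  rw [tendsto_order]
  constructor
  · intro a ha
    obtain ⟨x, ⟨m, hm, rfl⟩, hx⟩ := exists_lt_of_lt_csSup hne ha
    have ht : Filter.Tendsto (fun n : ℕ => Real.log (S m) / Real.log m -
        Real.log (S m) / Real.log (n : ℝ)) Filter.atTop
        (nhds (Real.log (S m) / Real.log m - 0)) :=
      tendsto_const_nhds.sub (Filter.Tendsto.const_div_atTop
        (Real.tendsto_log_atTop.comp tendsto_natCast_atTop_atTop) _)
    rw [sub_zero] at ht
    filter_upwards [ht.eventually_const_lt hx, Filter.eventually_ge_atTop 2] with n h1 h2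
    exact h1.trans_le (key m n hm h2)
  · intro a ha
    filter_upwards [Filter.eventually_ge_atTop 2] with n hn
    exact (le_csSup hbdd ⟨n, hn, rfl⟩).trans_lt ha
end

section
/- Let A be a finite set and let G : ZMod 5 → (A × A → A) be any deterministic guessing strategy on the bidirected 5-cycle, where at vertex i the guess depends on the values at vertices i−1 and i+1. Let Fix(G) = { a : ZMod 5 → A | for every i, a i = G i (a (i−1), a (i+1)) } be the set of correctly guessed configurations. Then (card Fix(G))² ≤ (card A)⁵; equivalently, the number of correctly guessed configurations is at most |A|^{5/2}. -/
set_option maxHeartbeats 1000000 in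
/-- Upper bound for the guessing game on the bidirected 5-cycle: for any
deterministic strategy `G`, the number of correctly guessed configurations
squared is at most `|A|^5`, i.e. the number of correctly guessed
configurations is at most `|A|^(5/2)`. -/
theorem c5_guessing_upper_bound (A : Type*) [Fintype A]
    (G : ZMod 5 → (A × A → A)) :
    (Nat.card { a : ZMod 5 → A // ∀ i, a i = G i (a (i - 1), a (i + 1)) }) ^ 2
      ≤ (Nat.card A) ^ 5 := by
  classical
  have key : ∀ a : ZMod 5 → A, (∀ i, a i = G i (a (i - 1), a (i + 1))) →
      a 0 = G 0 (a 4, a 1) ∧ a 1 = G 1 (a 0, a 2) ∧ a 2 = G 2 (a 1, a 3) ∧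
      a 3 = G 3 (a 2, a 4) ∧ a 4 = G 4 (a 3, a 0) := fun a h =>
    ⟨h 0, h 1, h 2, h 3, h 4⟩
  have ext5 : ∀ a b : ZMod 5 → A, a 0 = b 0 → a 1 = b 1 → a 2 = b 2 → a 3 = b 3 →
      a 4 = b 4 → a = b := by
    intro a b h0 h1 h2 h3 h4
    funext i
    have : i = 0 ∨ i = 1 ∨ i = 2 ∨ i = 3 ∨ i = 4 := by revert i; decide
    rcases this with rfl | rfl | rfl | rfl | rfl <;> assumption
  let S : Finset (ZMod 5 → A) :=
    Finset.univ.filter fun a => ∀ i, a i = G i (a (i - 1), a (i + 1))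
  have hS : Nat.card { a : ZMod 5 → A // ∀ i, a i = G i (a (i - 1), a (i + 1)) } = S.card := by
    rw [Nat.card_eq_fintype_card, Fintype.card_subtype]
  rw [hS, Nat.card_eq_fintype_card]
  let f : A × A → Finset (ZMod 5 → A) := fun t => S.filter fun a => (a 0, a 1) = t
  let p : A × A → Finset A := fun t => Finset.univ.filter fun z => t.2 = G 1 (t.1, z)
  let q : A × A → Finset A := fun t => Finset.univ.filter fun w => t.1 = G 0 (w, t.2)
  have hf : S.card = ∑ t, (f t).card :=
    Finset.card_eq_sum_card_fiberwise (fun _ _ => Finset.mem_coe.2 (Finset.mem_univ _))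
  have hp : ∑ t, (p t).card = Fintype.card A ^ 2 := by
    simp only [p, Finset.card_filter]
    rw [Fintype.sum_prod_type]
    have : ∀ x : A, ∑ y : A, ∑ z : A, (if y = G 1 (x, z) then 1 else 0) = Fintype.card A := by
      intro x
      rw [Finset.sum_comm]
      simp
    rw [Finset.sum_congr rfl (fun x _ => this x)]
    simp [sq]
  have hq : ∑ t, (q t).card = Fintype.card A ^ 2 := by
    simp only [q, Finset.card_filter]
    rw [Fintype.sum_prod_type_right]
    have : ∀ y : A, ∑ x : A, ∑ w : A, (if x = G 0 (w, y) then 1 else 0) = Fintype.card A := by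
      intro x
      rw [Finset.sum_comm]
      simp
    rw [Finset.sum_congr rfl (fun x _ => this x)]
    simp [sq]
  have h1 : ∀ t, (f t).card ≤ Fintype.card A := by
    intro t
    refine Finset.card_le_card_of_injOn (t := Finset.univ) (fun a => a 3) (by simp) ?_
    intro a ha b hb hab
    simp only [f, S, Finset.coe_filter, Finset.mem_filter, Finset.mem_univ, true_and,
      Set.mem_ofPred_eq] at ha hb
    obtain ⟨ha, rfl⟩ := ha
    obtain ⟨hb, hb'⟩ := hb
    have ka := key a ha
    have kb := key b hb
    simp only [Prod.mk.injEq] at hb'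
    dsimp only at hab
    apply ext5 <;> grind
  have h2 : ∀ t, (f t).card ≤ (p t).card * (q t).card := by
    intro t
    rw [← Finset.card_product]
    refine Finset.card_le_card_of_injOn (fun a => (a 2, a 4)) ?_ ?_
    · intro a ha
      simp only [f, S, Finset.coe_filter, Finset.mem_filter, Finset.mem_univ, true_and,
        Set.mem_ofPred_eq] at ha
      obtain ⟨ha, rfl⟩ := ha
      have ka := key a ha
      simp only [p, q, Finset.mem_coe, Finset.mem_product, Finset.mem_filter, Finset.mem_univ,
        true_and]
      exact ⟨ka.2.1, ka.1⟩
    intro a ha b hb hab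
    simp only [f, S, Finset.coe_filter, Finset.mem_filter, Finset.mem_univ, true_and,
      Set.mem_ofPred_eq] at ha hb
    obtain ⟨ha, rfl⟩ := ha
    obtain ⟨hb, hb'⟩ := hb
    have ka := key a ha
    have kb := key b hb
    simp only [Prod.mk.injEq] at hb' hab
    apply ext5 <;> grind
  have cs : (∑ t, (f t).card) ^ 2 ≤
      (∑ t, Fintype.card A * (p t).card) * ∑ t, (q t).card := by
    apply Finset.sum_sq_le_sum_mul_sum_of_sq_le_mul
    · intro _ _; exact Nat.zero_le _
    · intro _ _; exact Nat.zero_le _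
    · intro t _
      rw [sq, mul_assoc]
      exact Nat.mul_le_mul (h1 t) (h2 t)
  rw [← Finset.mul_sum, hp, hq, ← hf] at cs
  calc _ ≤ _ := cs
    _ = _ := by ring
end

section
/- Let B be a finite set with card B = m and let A = B × B, so card A = m². Then there exists a deterministic guessing strategy G : ZMod 5 → (A × A → A) on the bidirected 5-cycle whose set of correctly guessed configurations Fix(G) = { a : ZMod 5 → A | for every i, a i = G i (a (i−1), a (i+1)) } has cardinality exactly m⁵ = (m²)^{5/2}. Concretely, the strategy G i ((u₁,u₂), (w₁,w₂)) = (u₂, w₁), where (u₁,u₂) is the value at vertex i−1 and (w₁,w₂) the value at vertex i+1, achieves this. -/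
/-- Achievability for the guessing game on the bidirected 5-cycle: over the
alphabet `A = B × B` with `|B| = m`, the strategy
`G i ((u₁,u₂),(w₁,w₂)) = (u₂, w₁)` has exactly `m^5 = (m^2)^(5/2)` correctly
guessed configurations. -/
theorem c5_guessing_achievability (B : Type*) [Fintype B] (m : ℕ)
    (hm : Fintype.card B = m) :
    ∃ G : ZMod 5 → ((B × B) × (B × B) → B × B),
      (∀ i (u w : B × B), G i (u, w) = (u.2, w.1)) ∧
      Nat.card { a : ZMod 5 → B × B // ∀ i, a i = G i (a (i - 1), a (i + 1)) }
        = m ^ 5 := by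
  refine ⟨fun _ p => (p.1.2, p.2.1), fun _ _ _ => rfl, ?_⟩
  have e : { a : ZMod 5 → B × B // ∀ i, a i = ((a (i - 1)).2, (a (i + 1)).1) } ≃
      (ZMod 5 → B) :=
    { toFun := fun a i => (a.1 i).1
      invFun := fun x => ⟨fun i => (x i, x (i + 1)), fun i => by simp⟩
      left_inv := by
        rintro ⟨a, ha⟩
        apply Subtype.ext
        funext i
        apply Prod.ext
        · rfl
        · exact (congrArg Prod.snd (ha i)).symm
      right_inv := fun x => rfl }
  rw [Nat.card_congr e, Nat.card_eq_fintype_card, Fintype.card_fun, ZMod.card, hm]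
end

section
/- Let A be a finite set with at least two elements. Then there is no binary operation f : A → A → A satisfying all four identities universally: f (f x y) y = x, f x (f y x) = y, f (f x y) (f y x) = x, and f (f y x) (f x y) = y for all x, y ∈ A. In other words, no self-orthogonal self-decoding Latin square exists on any finite set of size greater than 1. -/
/-- No self-orthogonal self-decoding Latin square exists on any finite set
with at least two elements. -/
theorem no_self_orthogonal_self_decoding (A : Type*) [Finite A]
    (h : 2 ≤ Nat.card A) :
    ¬ ∃ f : A → A → A, ∀ x y : A,
        f (f x y) y = x ∧ f x (f y x) = y ∧
        f (f x y) (f y x) = x ∧ f (f y x) (f x y) = y := by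
  rintro ⟨f, hf⟩
  have inj : ∀ x, Function.Injective (f x) := fun x =>
    Finite.injective_iff_surjective.mpr fun y => ⟨f y x, (hf x y).2.1⟩
  have key : ∀ x y, y = f y x := fun x y =>
    inj (f x y) ((hf x y).1.trans (hf x y).2.2.1.symm)
  have : Nontrivial A := Finite.one_lt_card_iff_nontrivial.mp h
  obtain ⟨a, b, hab⟩ := exists_pair_ne A
  exact hab ((key (f b a) a).trans (hf a b).2.1)
end

section
/- Let A be a finite set. The following are equivalent: (i) there exist functions f, h₁, h₂, h₃, h₄ : A → A → A such that for all x, y ∈ A: h₁ (f x y) y = x, h₂ x (f x y) = y, h₃ (f x y) (f y x) = x, and h₄ (f x y) (f y x) = y; (ii) there exists a self-orthogonal Latin square on A, that is, a binary operation f : A → A → A such that for each fixed y the map x ↦ f x y is a bijection of A, for each fixed x the map y ↦ f x y is a bijection of A, and the map (x, y) ↦ (f x y, f y x) from A × A to A × A is injective. -/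
/-- The Term Coding system for self-orthogonal Latin squares is solvable
if and only if a self-orthogonal Latin square on `A` exists. -/
theorem sols_term_coding_iff (A : Type*) [Finite A] :
    (∃ f h₁ h₂ h₃ h₄ : A → A → A, ∀ x y : A,
        h₁ (f x y) y = x ∧ h₂ x (f x y) = y ∧
        h₃ (f x y) (f y x) = x ∧ h₄ (f x y) (f y x) = y) ↔
    (∃ f : A → A → A,
        (∀ y : A, Function.Bijective fun x => f x y) ∧
        (∀ x : A, Function.Bijective fun y => f x y) ∧
        Function.Injective fun p : A × A => (f p.1 p.2, f p.2 p.1)) := by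
  constructor
  · rintro ⟨f, h₁, h₂, h₃, h₄, h⟩
    refine ⟨f, fun y => Finite.injective_iff_bijective.mp ?_,
      fun x => Finite.injective_iff_bijective.mp ?_, ?_⟩
    · intro a b hab
      have hab' : f a y = f b y := hab
      rw [← (h a y).1, hab', (h b y).1]
    · intro a b hab
      have hab' : f x a = f x b := hab
      rw [← (h x a).2.1, hab', (h x b).2.1]
    · rintro ⟨a, b⟩ ⟨c, d⟩ hp
      obtain ⟨e₁, e₂⟩ := Prod.mk.inj hp
      have e₁' : f a b = f c d := e₁
      have e₂' : f b a = f d c := e₂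
      have k₁ : a = c := by rw [← (h a b).2.2.1, e₁', e₂', (h c d).2.2.1]
      have k₂ : b = d := by rw [← (h a b).2.2.2, e₁', e₂', (h c d).2.2.2]
      rw [k₁, k₂]
  · rintro ⟨f, hc, hr, ho⟩
    rcases isEmpty_or_nonempty A with hA | hA
    · exact ⟨f, f, f, f, f, fun x => hA.elim x⟩
    · have key := Function.leftInverse_invFun ho
      refine ⟨f, fun z y => Function.invFun (fun x => f x y) z,
        fun x z => Function.invFun (fun y => f x y) z,
        fun u v => (Function.invFun (fun p : A × A => (f p.1 p.2, f p.2 p.1)) (u, v)).1,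
        fun u v => (Function.invFun (fun p : A × A => (f p.1 p.2, f p.2 p.1)) (u, v)).2,
        fun x y => ⟨Function.leftInverse_invFun (hc y).1 x,
          Function.leftInverse_invFun (hr x).1 y,
          congrArg Prod.fst (key (x, y)), congrArg Prod.snd (key (x, y))⟩⟩
end

section
/- Let S : Bool → Bool → Bool satisfy S true true = false. Then the map T : Bool × Bool × Bool → Bool × Bool × Bool defined by T(x, y, z) = (S x x, S true y, S z true) is bijective if and only if S is the NAND function, i.e., S p q = !(p && q) for all p, q ∈ Bool. -/
/-- Maximal dispersion defines NAND: given `S true true = false`, the map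
`T (x,y,z) = (S x x, S true y, S z true)` on `Bool³` is bijective iff `S` is
the NAND function. -/
theorem dispersion_defines_nand (S : Bool → Bool → Bool)
    (h : S true true = false) :
    Function.Bijective (fun p : Bool × Bool × Bool =>
        (S p.1 p.1, S true p.2.1, S p.2.2 true)) ↔
      (∀ p q : Bool, S p q = !(p && q)) := by
  constructor
  · rintro ⟨-, hs⟩
    obtain ⟨⟨x, y, z⟩, hp⟩ := hs (true, true, true)
    simp only [Prod.mk.injEq] at hp
    obtain ⟨h1, h2, h3⟩ := hp
    intro p q
    cases x <;> cases y <;> cases z <;> cases p <;> cases q <;> simp_all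
  · intro hS
    apply Function.Involutive.bijective
    rintro ⟨x, y, z⟩
    simp [hS]
end

section
/- Let t ≥ 1 and let M be a finite type. The following are equivalent: (i) there exists a Steiner system S(t, t+1, |M|) on M, i.e., a finite collection B of subsets of M, each of cardinality t+1, such that every subset of M of cardinality t is contained in exactly one member of B; (ii) there exists a function f : (Fin t → M) → M such that for every injective tuple x : Fin t → M: (symmetry) f (x ∘ σ) = f x for every permutation σ of Fin t; (non-equality) f x ≠ x i for every i; and (inversion) f (Function.update x i (f x)) = x i for every i, where Function.update x i (f x) replaces the i-th entry of x by f x. -/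
theorem upd_inj_aux {t : ℕ} {M : Type*} [DecidableEq M] (x : Fin t → M)
    (hx : Function.Injective x) (i : Fin t) (z : M) (hz : ∀ j, z ≠ x j) :
    Function.Injective (Function.update x i z) := by
  intro a b hab
  by_cases ha : a = i <;> by_cases hb : b = i
  · rw [ha, hb]
  · subst ha
    rw [Function.update_self, Function.update_of_ne hb] at hab
    exact absurd hab (hz b)
  · subst hb
    rw [Function.update_self, Function.update_of_ne ha] at hab
    exact absurd hab.symm (hz a)
  · rw [Function.update_of_ne ha, Function.update_of_ne hb] at hab
    exact hx hab

theorem upd_notMem_aux {t : ℕ} {M : Type*} [DecidableEq M] (x : Fin t → M)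
    (hx : Function.Injective x) (i : Fin t) (z : M) (hz : ∀ j, z ≠ x j) :
    x i ∉ Finset.univ.image (Function.update x i z) := by
  intro h
  obtain ⟨j, -, hj⟩ := Finset.mem_image.1 h
  by_cases ha : j = i
  · subst ha
    rw [Function.update_self] at hj
    exact hz _ hj
  · rw [Function.update_of_ne ha] at hj
    exact ha (hx hj)

theorem upd_insert_aux {t : ℕ} {M : Type*} [DecidableEq M] (x : Fin t → M)
    (i : Fin t) (z : M) :
    insert (x i) (Finset.univ.image (Function.update x i z))
      = insert z (Finset.univ.image x) := by
  ext a
  simp only [Finset.mem_insert, Finset.mem_image, Finset.mem_univ, true_and]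
  constructor
  · rintro (h | ⟨j, hj⟩)
    · exact Or.inr ⟨i, h.symm⟩
    · by_cases ha : j = i
      · subst ha
        rw [Function.update_self] at hj
        exact Or.inl hj.symm
      · rw [Function.update_of_ne ha] at hj
        exact Or.inr ⟨j, hj⟩
  · rintro (h | ⟨j, hj⟩)
    · exact Or.inr ⟨i, by rw [Function.update_self, h]⟩
    · by_cases ha : j = i
      · subst ha
        exact Or.inl hj.symm
      · exact Or.inr ⟨j, by rw [Function.update_of_ne ha, hj]⟩

theorem perm_aux {t : ℕ} {M : Type*} [DecidableEq M] (x y : Fin t → M)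
    (hx : Function.Injective x) (hy : Function.Injective y)
    (h : Finset.univ.image x = Finset.univ.image y) :
    ∃ σ : Equiv.Perm (Fin t), y = x ∘ σ := by
  have h1 : ∀ j, ∃ k, x k = y j := by
    intro j
    have : y j ∈ Finset.univ.image x := by
      rw [h]; exact Finset.mem_image_of_mem _ (Finset.mem_univ _)
    simpa using this
  choose g hg using h1
  have gi : Function.Injective g := by
    intro a b hab
    apply hy
    rw [← hg a, ← hg b, hab]
  refine ⟨Equiv.ofBijective g (Finite.injective_iff_bijective.1 gi), ?_⟩
  funext j
  simp [hg]

/-- Algebraic characterisation of Steiner systems `S(t, t+1, n)`: a Steiner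
system on `M` exists iff there is a `t`-ary function `f` satisfying, on every
injective tuple, the symmetry, non-equality and inversion axioms. -/
theorem steiner_system_iff_function (t : ℕ) (ht : 1 ≤ t)
    (M : Type*) [Fintype M] [DecidableEq M] :
    (∃ B : Finset (Finset M),
        (∀ b ∈ B, b.card = t + 1) ∧
        (∀ s : Finset M, s.card = t → ∃! b, b ∈ B ∧ s ⊆ b)) ↔
    (∃ f : (Fin t → M) → M, ∀ x : Fin t → M, Function.Injective x →
        ((∀ σ : Equiv.Perm (Fin t), f (x ∘ σ) = f x) ∧
         (∀ i : Fin t, f x ≠ x i) ∧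
         (∀ i : Fin t, f (Function.update x i (f x)) = x i))) := by
  have cardim : ∀ x : Fin t → M, Function.Injective x → (Finset.univ.image x).card = t := by
    intro x hx
    rw [Finset.card_image_of_injective _ hx]; simp
  constructor
  · rintro ⟨B, hB, hS⟩
    have ex : ∀ x : Fin t → M, ∃ y, Function.Injective x →
        y ∉ Finset.univ.image x ∧ insert y (Finset.univ.image x) ∈ B := by
      intro x
      by_cases hx : Function.Injective x
      · obtain ⟨b, ⟨hb, hsb⟩, -⟩ := hS _ (cardim x hx)
        obtain ⟨y, hy, hyb⟩ := (Finset.covBy_iff_exists_insert).1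
          (Finset.covBy_iff_card_sdiff_eq_one.2 ⟨hsb, by
            rw [Finset.card_sdiff_of_subset hsb, hB b hb, cardim x hx]; omega⟩)
        exact ⟨y, fun _ => ⟨hy, by rw [hyb]; exact hb⟩⟩
      · exact ⟨x ⟨0, ht⟩, fun h => absurd h hx⟩
    choose f hf using ex
    have uniq : ∀ (s : Finset M) (y z : M), s.card = t → y ∉ s → insert y s ∈ B →
        insert z s ∈ B → y = z := by
      intro s y z hs hy h1 h2
      have h := (hS s hs).unique ⟨h1, Finset.subset_insert _ _⟩ ⟨h2, Finset.subset_insert _ _⟩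
      have : y ∈ insert z s := h ▸ Finset.mem_insert_self _ _
      exact (Finset.mem_insert.1 this).resolve_right hy
    refine ⟨f, fun x hx => ?_⟩
    have hne : ∀ i, f x ≠ x i := fun i h =>
      (hf x hx).1 (h ▸ Finset.mem_image_of_mem _ (Finset.mem_univ _))
    refine ⟨fun σ => ?_, hne, fun i => ?_⟩
    · have hxs : Function.Injective (x ∘ σ) := hx.comp σ.injective
      have him : Finset.univ.image (x ∘ σ) = Finset.univ.image x := by
        rw [← Finset.image_image, Finset.image_univ_equiv]
      have h := hf _ hxs
      rw [him] at h
      exact uniq _ _ _ (cardim x hx) h.1 h.2 (hf x hx).2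
    · have hu := upd_inj_aux x hx i _ hne
      refine uniq _ _ _ (cardim _ hu) (hf _ hu).1 (hf _ hu).2 ?_
      rw [upd_insert_aux]
      exact (hf x hx).2
  · rintro ⟨f, hf⟩
    classical
    have same : ∀ x y : Fin t → M, Function.Injective x → Function.Injective y →
        Finset.univ.image x = Finset.univ.image y → f y = f x := by
      intro x y hx hy h
      obtain ⟨σ, rfl⟩ := perm_aux x y hx hy h
      exact (hf x hx).1 σ
    have nm : ∀ x : Fin t → M, Function.Injective x → f x ∉ Finset.univ.image x := by
      intro x hx h
      obtain ⟨j, -, hj⟩ := Finset.mem_image.1 h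
      exact (hf x hx).2.1 j hj.symm
    refine ⟨(Finset.univ.filter fun x : Fin t → M => Function.Injective x).image
      fun x => insert (f x) (Finset.univ.image x), ?_, ?_⟩
    · intro b hb
      obtain ⟨x, hx, rfl⟩ := Finset.mem_image.1 hb
      have hx := (Finset.mem_filter.1 hx).2
      rw [Finset.card_insert_of_notMem (nm x hx), cardim x hx]
    · intro s hs
      obtain ⟨x, hx, rfl⟩ : ∃ x : Fin t → M, Function.Injective x ∧
          Finset.univ.image x = s := by
        let e := s.equivFinOfCardEq hs
        refine ⟨fun i => (e.symm i : M), fun a b h => e.symm.injective (Subtype.ext h), ?_⟩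
        ext a
        simp only [Finset.mem_image, Finset.mem_univ, true_and]
        constructor
        · rintro ⟨i, rfl⟩
          exact (e.symm i).2
        · intro ha
          exact ⟨e ⟨a, ha⟩, by simp⟩
      refine ⟨insert (f x) (Finset.univ.image x), ⟨Finset.mem_image.2
        ⟨x, Finset.mem_filter.2 ⟨Finset.mem_univ _, hx⟩, rfl⟩, Finset.subset_insert _ _⟩, ?_⟩
      rintro b ⟨hb, hsb⟩
      obtain ⟨y, hy, rfl⟩ := Finset.mem_image.1 hb
      have hy := (Finset.mem_filter.1 hy).2
      by_cases hfy : f y ∈ Finset.univ.image x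
      · obtain ⟨i, hi⟩ : ∃ i, y i ∉ Finset.univ.image x := by
          by_contra! hall
          have hsub : insert (f y) (Finset.univ.image y) ⊆ Finset.univ.image x := by
            intro a ha
            rcases Finset.mem_insert.1 ha with rfl | ha
            · exact hfy
            · obtain ⟨j, -, rfl⟩ := Finset.mem_image.1 ha
              exact hall j
          have := Finset.card_le_card hsub
          rw [Finset.card_insert_of_notMem (nm y hy), cardim y hy, cardim x hx] at this
          omega
        have hu := upd_inj_aux y hy i _ (hf y hy).2.1
        have hsub : Finset.univ.image x ⊆ Finset.univ.image (Function.update y i (f y)) := by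
          intro a ha
          have h := hsb ha
          rw [← upd_insert_aux y i] at h
          refine (Finset.mem_insert.1 h).resolve_left ?_
          rintro rfl
          exact hi ha
        have heq := Finset.eq_of_subset_of_card_le hsub (by rw [cardim _ hu, cardim x hx])
        rw [← same _ _ hx hu heq, (hf y hy).2.2 i, heq, upd_insert_aux]
      · have hsub : Finset.univ.image x ⊆ Finset.univ.image y := by
          intro a ha
          refine (Finset.mem_insert.1 (hsb ha)).resolve_left ?_
          rintro rfl
          exact hfy ha
        have heq := Finset.eq_of_subset_of_card_le hsub (by rw [cardim _ hy, cardim x hx])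
        rw [same _ _ hx hy heq, heq]
end

section
/- For a binary operation f : Fin 4 → Fin 4 → Fin 4, let C_f = { (x, y) ∈ Fin 4 × Fin 4 | f x x = x ∧ f x y = f y x ∧ f x (f x y) = y }. Then the maximum of card C_f over all f : Fin 4 → Fin 4 → Fin 4 equals 13; in particular, there exists an idempotent, commutative f for which the inversion identity f x (f x y) = y fails on exactly three ordered pairs (so card C_f = 16 − 3 = 13), and no f attains all 16 pairs (no Steiner quasigroup of order 4 exists). -/
def SGood (f : Fin 4 → Fin 4 → Fin 4) (x y : Fin 4) : Prop :=
  f x x = x ∧ f x y = f y x ∧ f x (f x y) = y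

lemma fin4_invol : ∀ (x a b c d : Fin 4),
    (![a, b, c, d] x = x) → (∀ y, ![a, b, c, d] (![a, b, c, d] y) = y) →
    ∃ y, y ≠ x ∧ ![a, b, c, d] y = y := by
  decide +kernel

lemma fin4_invol' (g : Fin 4 → Fin 4) (x : Fin 4) (h : g x = x) (h2 : ∀ y, g (g y) = y) :
    ∃ y, y ≠ x ∧ g y = y := by
  have e : g = ![g 0, g 1, g 2, g 3] := by
    funext i; fin_cases i <;> rfl
  have := fin4_invol x (g 0) (g 1) (g 2) (g 3)
  rw [← e] at this
  exact this h h2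

lemma row_good (f : Fin 4 → Fin 4 → Fin 4) (hid : ∀ x, f x x = x) (x : Fin 4)
    (h : ∀ y, SGood f x y) : ∃ y, y ≠ x ∧ f x y = y ∧ ¬ SGood f y x := by
  obtain ⟨y, hy, e⟩ := fin4_invol' (f x) x (hid x) (fun y => (h y).2.2)
  refine ⟨y, hy, e, fun hg => hy ?_⟩
  have h1 := hg.2.2
  have h2 := hg.2.1
  rw [h2, e, hid] at h1
  exact h1

lemma exists_free : ∀ (p q : Fin 4 × Fin 4) (x : Fin 4), ∃ y, (x, y) ≠ p ∧ (x, y) ≠ q := by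
  decide +kernel

lemma cover : ∀ (a b c d : Fin 4),
    (∀ x, x = a ∨ x = b ∨ x = c ∨ x = d) →
    a ≠ b ∧ a ≠ c ∧ a ≠ d ∧ b ≠ c ∧ b ≠ d ∧ c ≠ d := by
  decide +kernel

lemma half (f : Fin 4 → Fin 4 → Fin 4) (hid : ∀ x, f x x = x) (a b c d : Fin 4)
    (hc : ∀ x, x = a ∨ x = b ∨ x = c ∨ x = d)
    (hg : ∀ x y, SGood f x y ∨ (x = a ∧ y = b) ∨ (x = c ∧ y = d)) : f b d = c := by
  obtain ⟨h1, h2, h3, h4, h5, h6⟩ := cover a b c d hc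
  have hb : ∀ y, SGood f b y := by
    intro y
    rcases hg b y with h | h | h
    · exact h
    · exact absurd h.1.symm h1
    · exact absurd h.1 h4
  obtain ⟨y, hy, e, hn⟩ := row_good f hid b hb
  have hya : y = a := by
    rcases hg y b with h | h | h
    · exact absurd h hn
    · exact h.1
    · exact absurd h.2 h5
  subst hya
  have hi : ∀ y, f b (f b y) = y := fun y => (hb y).2.2
  rcases hc (f b d) with h | h | h | h
  · have := hi d
    rw [h, e] at this
    exact absurd this h3
  · have := hi d
    rw [h, hid] at this
    exact absurd this h5
  · exact h
  · rcases hg d b with hh | hh | hh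
    · have h7 := hh.2.1
      have h8 := hh.2.2
      rw [h7, h, hid] at h8
      exact absurd h8.symm h5
    · exact absurd hh.1.symm h3
    · exact absurd hh.1.symm h6

lemma no_two (f : Fin 4 → Fin 4 → Fin 4) (p q : Fin 4 × Fin 4)
    (hg : ∀ x y, SGood f x y ∨ (x, y) = p ∨ (x, y) = q) : False := by
  have hid : ∀ x, f x x = x := by
    intro x
    obtain ⟨y, h1, h2⟩ := exists_free p q x
    rcases hg x y with h | h | h
    · exact h.1
    · exact absurd h h1
    · exact absurd h h2
  obtain ⟨a, b⟩ := p
  obtain ⟨c, d⟩ := q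
  simp only [Prod.mk.injEq] at hg
  have hc : ∀ x, x = a ∨ x = b ∨ x = c ∨ x = d := by
    intro x
    by_contra hx
    push Not at hx
    obtain ⟨ha, hb, hc, hd⟩ := hx
    obtain ⟨y, _, _, hn⟩ := row_good f hid x (fun y => by
      rcases hg x y with h | h | h
      · exact h
      · exact absurd h.1 ha
      · exact absurd h.1 hc)
    rcases hg y x with h | h | h
    · exact hn h
    · exact hb h.2
    · exact hd h.2
  have e1 := half f hid a b c d hc hg
  have e2 := half f hid c d a b (fun x => by have := hc x; tauto)
    (fun x y => by have := hg x y; tauto)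
  obtain ⟨h1, h2, h3, h4, h5, h6⟩ := cover a b c d hc
  rcases hg b d with h | h | h
  · have := h.2.1
    rw [e1, e2] at this
    exact h2 this.symm
  · exact h1 h.1.symm
  · exact h4 h.1

lemma card_le (f : Fin 4 → Fin 4 → Fin 4) :
    Nat.card { p : Fin 4 × Fin 4 // SGood f p.1 p.2 } ≤ 13 := by
  classical
  by_contra hlt
  rw [Nat.card_eq_fintype_card, Fintype.card_subtype] at hlt
  have hs := Finset.card_filter_add_card_filter_not (s := (Finset.univ : Finset (Fin 4 × Fin 4)))
    (fun p => SGood f p.1 p.2)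
  have hu : (Finset.univ : Finset (Fin 4 × Fin 4)).card = 16 := by simp
  rw [hu] at hs
  obtain ⟨t, ht, ht2⟩ := Finset.exists_superset_card_eq
    (s := Finset.univ.filter (fun p : Fin 4 × Fin 4 => ¬ SGood f p.1 p.2)) (n := 2)
    (by omega) (by simp)
  obtain ⟨p, q, -, rfl⟩ := Finset.card_eq_two.1 ht2
  refine no_two f p q (fun x y => ?_)
  by_cases h : SGood f x y
  · exact Or.inl h
  · right
    have : (x, y) ∈ ({p, q} : Finset (Fin 4 × Fin 4)) := ht (by simpa using h)
    simpa using this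

def exF : Fin 4 → Fin 4 → Fin 4 :=
  ![![0, 0, 0, 0], ![0, 1, 3, 2], ![0, 3, 2, 1], ![0, 2, 1, 3]]

lemma exF_card : Nat.card { p : Fin 4 × Fin 4 //
    exF p.1 p.1 = p.1 ∧ exF p.1 p.2 = exF p.2 p.1 ∧ exF p.1 (exF p.1 p.2) = p.2 } = 13 := by
  rw [Nat.card_eq_fintype_card, Fintype.card_subtype]
  decide +kernel

/-- For domain size `4`, the maximum of `|C_f|` over all binary operations
`f : Fin 4 → Fin 4 → Fin 4` equals `13`; there is an idempotent commutative
`f` for which inversion fails on exactly three ordered pairs (so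
`|C_f| = 16 - 3 = 13`), and no `f` attains all `16` pairs. -/
theorem steiner_code_four :
    IsGreatest { k : ℕ | ∃ f : Fin 4 → Fin 4 → Fin 4,
        k = Nat.card { p : Fin 4 × Fin 4 //
          f p.1 p.1 = p.1 ∧ f p.1 p.2 = f p.2 p.1 ∧
          f p.1 (f p.1 p.2) = p.2 } } 13 ∧
    (∃ f : Fin 4 → Fin 4 → Fin 4,
        (∀ x, f x x = x) ∧ (∀ x y, f x y = f y x) ∧
        Nat.card { p : Fin 4 × Fin 4 // f p.1 (f p.1 p.2) ≠ p.2 } = 3 ∧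
        Nat.card { p : Fin 4 × Fin 4 //
          f p.1 p.1 = p.1 ∧ f p.1 p.2 = f p.2 p.1 ∧
          f p.1 (f p.1 p.2) = p.2 } = 13) ∧
    ¬ ∃ f : Fin 4 → Fin 4 → Fin 4, ∀ x y : Fin 4,
        f x x = x ∧ f x y = f y x ∧ f x (f x y) = y := by
  refine ⟨⟨⟨exF, exF_card.symm⟩, ?_⟩, ⟨exF, by decide +kernel, by decide +kernel, ?_, exF_card⟩, ?_⟩
  · rintro k ⟨f, rfl⟩
    exact card_le f
  · rw [Nat.card_eq_fintype_card, Fintype.card_subtype]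
    decide +kernel
  · rintro ⟨f, hf⟩
    exact no_two f 0 0 (fun x y => Or.inl (hf x y))
end
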